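/- For every linear tree-to-word transducer M there exists an equivalent linear tree-to-word transducer M' in which every quasi-periodic state is earliest (i.e., every state q of M' with L_q quasi-periodic satisfies lcp(L_q) = lcs(L_q) = ε, and is hence periodic). -/

import Mathlib

namespace LTWpaper

/-- Trees over a ranked alphabet: a symbol of arity `n` with `n` children. -/
inductive RTree (F : Type) (ar : F → ℕ) : Type
  | node (f : F) (ts : Fin (ar f) → RTree F ar) : RTree F ar

/-- A rule right-hand side `u₀ q₁(x_{σ(1)}) u₁ … q_n(x_{σ(n)}) u_n`:
`word i` is `u_i` (for `i : Fin (n+1)`), `st i` is `q_{i+1}` (for `i : Fin n`),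
and position `i` reads the subtree `x_{perm i}`. -/
structure LTWRule (Δ Q : Type) (n : ℕ) where
  word : Fin (n + 1) → List Δ
  st : Fin n → Q
  perm : Equiv.Perm (Fin n)

/-- A (deterministic) linear tree-to-word transducer with axiom `pre init(x) post`. -/
structure LTW (F : Type) (ar : F → ℕ) (Δ Q : Type) where
  pre : List Δ
  init : Q
  post : List Δ
  rules : Q → (f : F) → Option (LTWRule Δ Q (ar f))

/-- `u 0 ++ ws 0 ++ u 1 ++ ws 1 ++ ⋯ ++ ws (n-1) ++ u n`. -/
def interleave {Δ : Type} (n : ℕ) (u : Fin (n + 1) → List Δ) (ws : Fin n → List Δ) :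
    List Δ :=
  u 0 ++ (List.finRange n).foldr (fun i acc => ws i ++ u i.succ ++ acc) []

/-- The partial function `⟦M⟧_q` computed by state `q`. -/
def LTW.semState {F Δ Q : Type} {ar : F → ℕ} (M : LTW F ar Δ Q) :
    RTree F ar → Q → Option (List Δ)
  | .node f ts, q =>
    match M.rules q f with
    | none => none
    | some r =>
      if h : ∀ i : Fin (ar f), (M.semState (ts (r.perm i)) (r.st i)).isSome then
        some (interleave (ar f) r.word fun i => (M.semState (ts (r.perm i)) (r.st i)).get (h i))
      else none

/-- The partial function `⟦M⟧` computed by the transducer. -/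
def LTW.sem {F Δ Q : Type} {ar : F → ℕ} (M : LTW F ar Δ Q) (t : RTree F ar) :
    Option (List Δ) :=
  (M.semState t M.init).map fun w => M.pre ++ w ++ M.post

/-- The output language `L_q` of a state. -/
def LTW.lang {F Δ Q : Type} {ar : F → ℕ} (M : LTW F ar Δ Q) (q : Q) : Set (List Δ) :=
  {w | ∃ t, M.semState t q = some w}

/-- Standing assumption: every state has nonempty domain. -/
def LTW.NonemptyDoms {F Δ Q : Type} {ar : F → ℕ} (M : LTW F ar Δ Q) : Prop :=
  ∀ q : Q, ∃ t w, M.semState t q = some w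

/-- `w^n`, the `n`-fold concatenation of the word `w`. -/
def listPow {Δ : Type} (w : List Δ) : ℕ → List Δ
  | 0 => []
  | n + 1 => w ++ listPow w n

/-- `lcp L = ε`: the only common prefix of all words of `L` is the empty word. -/
def LcpEps {Δ : Type} (L : Set (List Δ)) : Prop :=
  ∀ w : List Δ, (∀ v ∈ L, w <+: v) → w = []

/-- `lcs L = ε`: the only common suffix of all words of `L` is the empty word. -/
def LcsEps {Δ : Type} (L : Set (List Δ)) : Prop :=
  ∀ w : List Δ, (∀ v ∈ L, w <:+ v) → w = []

/-- A language is earliest if `lcp L = lcs L = ε`. -/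
def EarliestLang {Δ : Type} (L : Set (List Δ)) : Prop := LcpEps L ∧ LcsEps L

/-- `L ⊆ w*`. -/
def SubPow {Δ : Type} (w : List Δ) (L : Set (List Δ)) : Prop :=
  ∀ v ∈ L, ∃ n : ℕ, v = listPow w n

/-- `L` is periodic of period `w`: `w` is a smallest word with `L ⊆ w*`. -/
def PeriodicOf {Δ : Type} (L : Set (List Δ)) (w : List Δ) : Prop :=
  SubPow w L ∧ ∀ w' : List Δ, SubPow w' L → w.length ≤ w'.length

/-- `L` is periodic. -/
def Periodic {Δ : Type} (L : Set (List Δ)) : Prop := ∃ w, PeriodicOf L w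

/-- `L` is quasi-periodic on the left of handle `u` and period `w`:
`w` is a smallest word with `L ⊆ u w*`. -/
def QPLeftOf {Δ : Type} (L : Set (List Δ)) (u w : List Δ) : Prop :=
  (∀ v ∈ L, ∃ n : ℕ, v = u ++ listPow w n) ∧
  ∀ w' : List Δ, (∀ v ∈ L, ∃ n : ℕ, v = u ++ listPow w' n) → w.length ≤ w'.length

/-- `L` is quasi-periodic on the right of handle `u` and period `w`:
`w` is a smallest word with `L ⊆ w* u`. -/
def QPRightOf {Δ : Type} (L : Set (List Δ)) (u w : List Δ) : Prop :=
  (∀ v ∈ L, ∃ n : ℕ, v = listPow w n ++ u) ∧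
  ∀ w' : List Δ, (∀ v ∈ L, ∃ n : ℕ, v = listPow w' n ++ u) → w.length ≤ w'.length

/-- `L` is quasi-periodic (on the left or on the right). -/
def QuasiPeriodic {Δ : Type} (L : Set (List Δ)) : Prop :=
  (∃ u w, QPLeftOf L u w) ∨ (∃ u w, QPRightOf L u w)

/-- The language `L u = { v u : v ∈ L }`. -/
def appendLang {Δ : Type} (L : Set (List Δ)) (u : List Δ) : Set (List Δ) :=
  {v | ∃ x ∈ L, v = x ++ u}

/-- The language `L₁ u L₂ = { a u b : a ∈ L₁, b ∈ L₂ }`. -/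
def pairLang {Δ : Type} (L₁ : Set (List Δ)) (u : List Δ) (L₂ : Set (List Δ)) :
    Set (List Δ) :=
  {v | ∃ a ∈ L₁, ∃ b ∈ L₂, v = a ++ u ++ b}

/-- An LTW is earliest: every state `q` satisfies `lcp L_q = lcs L_q = ε`, and in every rule
every part `qᵢ(x) uᵢ` satisfies `lcp (L_{qᵢ} uᵢ) = ε`. -/
def LTW.Earliest {F Δ Q : Type} {ar : F → ℕ} (M : LTW F ar Δ Q) : Prop :=
  (∀ q : Q, EarliestLang (M.lang q)) ∧
  ∀ (q : Q) (f : F) (r : LTWRule Δ Q (ar f)), M.rules q f = some r →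
    ∀ i : Fin (ar f), LcpEps (appendLang (M.lang (r.st i)) (r.word i.succ))

/-- An erasing state: `L_q = {ε}`. -/
def LTW.Erasing {F Δ Q : Type} {ar : F → ℕ} (M : LTW F ar Δ Q) (q : Q) : Prop :=
  M.lang q = {([] : List Δ)}

/-- Erase-ordered: in every rule, if `qᵢ` is erasing then every later `q_j` is erasing,
`σ(i) ≤ σ(j)` and `u_j = ε`. -/
def LTW.EraseOrdered {F Δ Q : Type} {ar : F → ℕ} (M : LTW F ar Δ Q) : Prop :=
  ∀ (q : Q) (f : F) (r : LTWRule Δ Q (ar f)), M.rules q f = some r →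
    ∀ i j : Fin (ar f), M.Erasing (r.st i) → i ≤ j →
      M.Erasing (r.st j) ∧ r.perm i ≤ r.perm j ∧ r.word j.succ = []

/-- Co-reachable pairs of states of two transducers over the same input alphabet. -/
inductive CoReach {F Δ Q₁ Q₂ : Type} {ar : F → ℕ}
    (M₁ : LTW F ar Δ Q₁) (M₂ : LTW F ar Δ Q₂) : Q₁ → Q₂ → Prop
  | base : CoReach M₁ M₂ M₁.init M₂.init
  | step {q₁ : Q₁} {q₂ : Q₂} {f : F} {r₁ : LTWRule Δ Q₁ (ar f)} {r₂ : LTWRule Δ Q₂ (ar f)}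
      {i j : Fin (ar f)} :
      CoReach M₁ M₂ q₁ q₂ → M₁.rules q₁ f = some r₁ → M₂.rules q₂ f = some r₂ →
      r₁.perm i = r₂.perm j → CoReach M₁ M₂ (r₁.st i) (r₂.st j)

/-- Two LTWs are same-ordered: co-reachable states either both lack a rule for `f`,
or have rules for `f` with the same permutation. -/
def SameOrdered {F Δ Q₁ Q₂ : Type} {ar : F → ℕ}
    (M₁ : LTW F ar Δ Q₁) (M₂ : LTW F ar Δ Q₂) : Prop :=
  ∀ q₁ q₂, CoReach M₁ M₂ q₁ q₂ → ∀ f : F,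
    (M₁.rules q₁ f = none ∧ M₂.rules q₂ f = none) ∨
    ∃ (r₁ : LTWRule Δ Q₁ (ar f)) (r₂ : LTWRule Δ Q₂ (ar f)),
      M₁.rules q₁ f = some r₁ ∧ M₂.rules q₂ f = some r₂ ∧ r₁.perm = r₂.perm

/-- `Accessible q p`: state `p` is accessible from state `q`. -/
inductive LTW.Accessible {F Δ Q : Type} {ar : F → ℕ} (M : LTW F ar Δ Q) : Q → Q → Prop
  | refl (q : Q) : M.Accessible q q
  | step {q p : Q} {f : F} {r : LTWRule Δ Q (ar f)} (i : Fin (ar f)) :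
      M.Accessible q p → M.rules p f = some r → M.Accessible q (r.st i)

/-- Partial normal form. -/
def LTW.PartialNormalForm {F Δ Q : Type} {ar : F → ℕ} (M : LTW F ar Δ Q) : Prop :=
  (∀ q : Q, QuasiPeriodic (M.lang q) → EarliestLang (M.lang q)) ∧
  M.EraseOrdered ∧
  ∀ (q : Q) (f : F) (r : LTWRule Δ Q (ar f)), M.rules q f = some r →
    ∀ (i : ℕ) (hi : i + 1 < ar f),
      QuasiPeriodic (pairLang (M.lang (r.st ⟨i, Nat.lt_of_succ_lt hi⟩))
          (r.word (Fin.succ ⟨i, Nat.lt_of_succ_lt hi⟩)) (M.lang (r.st ⟨i + 1, hi⟩))) →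
      EarliestLang (pairLang (M.lang (r.st ⟨i, Nat.lt_of_succ_lt hi⟩))
          (r.word (Fin.succ ⟨i, Nat.lt_of_succ_lt hi⟩)) (M.lang (r.st ⟨i + 1, hi⟩))) ∧
      r.perm ⟨i, Nat.lt_of_succ_lt hi⟩ < r.perm ⟨i + 1, hi⟩

section Aux

theorem interleave_zero {Δ : Type} (u : Fin 1 → List Δ) (ws : Fin 0 → List Δ) :
    interleave 0 u ws = u 0 := by
  simp [interleave]

theorem interleave_succ {Δ : Type} (n : ℕ) (u : Fin (n + 2) → List Δ)
    (ws : Fin (n + 1) → List Δ) :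
    interleave (n + 1) u ws =
      u 0 ++ ws 0 ++ interleave n (fun j => u j.succ) (fun i => ws i.succ) := by
  simp [interleave, List.finRange_succ, List.foldr_map]

theorem interleave_length {Δ : Type} (n : ℕ) (u : Fin (n + 1) → List Δ)
    (ws : Fin n → List Δ) :
    (interleave n u ws).length = ∑ j, (u j).length + ∑ i, (ws i).length := by
  induction n with
  | zero => simp [interleave_zero]
  | succ n ih =>
    rw [interleave_succ, Fin.sum_univ_succ,
      Fin.sum_univ_succ (f := fun i => (ws i).length)]
    simp only [List.length_append, ih]
    ring

/-- Shift the handles `A i`, `B i` of each argument into the surrounding words. -/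
def shiftW {Δ : Type} : (n : ℕ) → List Δ → (Fin (n + 1) → List Δ) → (Fin n → List Δ) →
    (Fin n → List Δ) → Fin (n + 1) → List Δ
  | 0, p, u, _, _ => fun _ => p ++ u 0
  | n + 1, p, u, A, B => Fin.cons (p ++ u 0 ++ A 0)
      (shiftW n (B 0) (fun j => u j.succ) (fun i => A i.succ) (fun i => B i.succ))

theorem interleave_shiftW {Δ : Type} (n : ℕ) (p : List Δ) (u : Fin (n + 1) → List Δ)
    (A B ws : Fin n → List Δ) :
    interleave n (shiftW n p u A B) ws =
      p ++ interleave n u (fun i => A i ++ ws i ++ B i) := by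
  induction n generalizing p with
  | zero => simp [interleave_zero, shiftW]
  | succ n ih =>
    rw [interleave_succ, interleave_succ]
    simp [shiftW, ih]

theorem listPow_add {Δ : Type} (w : List Δ) (a b : ℕ) :
    listPow w (a + b) = listPow w a ++ listPow w b := by
  induction a with
  | zero => simp [listPow]
  | succ a ih => rw [Nat.succ_add]; simp [listPow, ih]

theorem listPow_length {Δ : Type} (w : List Δ) (a : ℕ) :
    (listPow w a).length = w.length * a := by
  induction a with
  | zero => simp [listPow]
  | succ a ih => simp [listPow, ih]; ring

theorem interleave_pow {Δ : Type} (n : ℕ) (w : List Δ) (c : ℕ) (k : Fin n → ℕ) :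
    interleave n (Fin.cons (listPow w c) (fun _ => [])) (fun i => listPow w (k i)) =
      listPow w (c + ∑ i, k i) := by
  have key : ∀ (n : ℕ) (k : Fin n → ℕ),
      interleave n (fun _ => []) (fun i => listPow w (k i)) = listPow w (∑ i, k i) := by
    intro n
    induction n with
    | zero => intro k; simp [interleave_zero, listPow]
    | succ n ih => intro k; rw [interleave_succ, ih, Fin.sum_univ_succ, listPow_add]; simp
  cases n with
  | zero => simp [interleave_zero]
  | succ n =>
    rw [interleave_succ, Fin.sum_univ_succ, listPow_add, listPow_add, ← key]
    simp

variable {F Δ Q Q' : Type} {ar : F → ℕ}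

theorem semState_node_none (M : LTW F ar Δ Q) (f : F) (ts : Fin (ar f) → RTree F ar) (q : Q)
    (h : M.rules q f = none) : M.semState (.node f ts) q = none := by
  simp [LTW.semState, h]

theorem semState_node_some (M : LTW F ar Δ Q) (f : F) (ts : Fin (ar f) → RTree F ar) (q : Q)
    (r : LTWRule Δ Q (ar f)) (h : M.rules q f = some r) (ws : Fin (ar f) → List Δ)
    (hw : ∀ i, M.semState (ts (r.perm i)) (r.st i) = some (ws i)) :
    M.semState (.node f ts) q = some (interleave (ar f) r.word ws) := by
  simp [LTW.semState, h, hw]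

theorem semState_node_undef (M : LTW F ar Δ Q) (f : F) (ts : Fin (ar f) → RTree F ar) (q : Q)
    (r : LTWRule Δ Q (ar f)) (h : M.rules q f = some r) (i : Fin (ar f))
    (hw : M.semState (ts (r.perm i)) (r.st i) = none) :
    M.semState (.node f ts) q = none := by
  simp only [LTW.semState, h]
  rw [dif_neg]
  intro h'
  have := h' i
  simp [hw] at this

theorem simulation (M : LTW F ar Δ Q) (M' : LTW F ar Δ Q') (π : Q' → Q)
    (g : Q' → List Δ → List Δ)
    (hnone : ∀ x f, M.rules (π x) f = none → M'.rules x f = none)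
    (hsome : ∀ x f r, M.rules (π x) f = some r → ∃ r', M'.rules x f = some r' ∧
      r'.perm = r.perm ∧ (∀ i, π (r'.st i) = r.st i) ∧
      ∀ ws : Fin (ar f) → List Δ, (∀ i, ws i ∈ M.lang (r.st i)) →
        g x (interleave (ar f) r.word ws) =
          interleave (ar f) r'.word (fun i => g (r'.st i) (ws i)))
    (t : RTree F ar) : ∀ x, M'.semState t x = (M.semState t (π x)).map (g x) := by
  induction t with
  | node f ts ih =>
    intro x
    cases hr : M.rules (π x) f with
    | none =>
      rw [semState_node_none M f ts _ hr, semState_node_none M' f ts _ (hnone x f hr)]; rfl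
    | some r =>
      obtain ⟨r', hr', hp, hπ, hg⟩ := hsome x f r hr
      by_cases hd : ∀ i, ∃ w, M.semState (ts (r.perm i)) (r.st i) = some w
      · choose ws hws using hd
        rw [semState_node_some M f ts _ r hr ws hws,
          semState_node_some M' f ts x r' hr' (fun i => g (r'.st i) (ws i))]
        · simp only [Option.map_some]
          rw [hg ws (fun i => ⟨_, hws i⟩)]
        · intro i
          rw [ih, hπ, hp, hws]; rfl
      · push Not at hd
        obtain ⟨i, hi⟩ := hd
        have hi' := Option.eq_none_iff_forall_ne_some.mpr hi
        rw [semState_node_undef M f ts _ r hr i hi', semState_node_undef M' f ts x r' hr' i]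
        · rfl
        · rw [ih, hπ, hp, hi']; rfl

theorem interleave_mem_lang (M : LTW F ar Δ Q) (f : F) (q : Q)
    (r : LTWRule Δ Q (ar f)) (h : M.rules q f = some r) (ws : Fin (ar f) → List Δ)
    (hw : ∀ i, ws i ∈ M.lang (r.st i)) : interleave (ar f) r.word ws ∈ M.lang q := by
  choose T hT using hw
  refine ⟨.node f (fun j => T (r.perm.symm j)), ?_⟩
  apply semState_node_some M f _ q r h
  intro i
  simpa using hT i

/-- Minimal length of an output. -/
noncomputable def minLen (M : LTW F ar Δ Q) (q : Q) : ℕ := sInf (List.length '' M.lang q)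

theorem exists_minLen (M : LTW F ar Δ Q) (hdom : M.NonemptyDoms) (q : Q) :
    ∃ v ∈ M.lang q, v.length = minLen M q := by
  have : (List.length '' M.lang q).Nonempty := by
    obtain ⟨t, w, h⟩ := hdom q
    exact ⟨_, w, ⟨t, h⟩, rfl⟩
  exact Nat.sInf_mem this

theorem minLen_le (M : LTW F ar Δ Q) (q : Q) (v : List Δ) (hv : v ∈ M.lang q) :
    minLen M q ≤ v.length := Nat.sInf_le ⟨v, hv, rfl⟩

/-- All output lengths are congruent modulo `d`. -/
def Good (M : LTW F ar Δ Q) (d : ℕ) (q : Q) : Prop :=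
  ∀ v ∈ M.lang q, ∃ k, v.length = minLen M q + d * k

theorem Good.child (M : LTW F ar Δ Q) (hdom : M.NonemptyDoms) {d : ℕ} {q : Q}
    (hg : Good M d q) {f : F} {r : LTWRule Δ Q (ar f)} (h : M.rules q f = some r)
    (i : Fin (ar f)) : Good M d (r.st i) := by
  classical
  intro v hv
  choose m hm hml using fun q => exists_minLen M hdom q
  obtain ⟨a, ha⟩ := hg _ (interleave_mem_lang M f q r h (fun j => m (r.st j)) (fun j => hm _))
  obtain ⟨b, hb⟩ := hg _ (interleave_mem_lang M f q r h
    (Function.update (fun j => m (r.st j)) i v) (fun j => by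
      by_cases hj : j = i
      · subst hj; simpa using hv
      · simpa [hj] using hm _))
  rw [interleave_length, ← Finset.add_sum_erase _ _ (Finset.mem_univ i)] at ha hb
  have hs : ∑ x ∈ Finset.univ.erase i, (Function.update (fun j => m (r.st j)) i v x).length =
      ∑ x ∈ Finset.univ.erase i, (m (r.st x)).length := by
    apply Finset.sum_congr rfl
    intro x hx
    rw [Function.update_of_ne (Finset.ne_of_mem_erase hx)]
  rw [hs, Function.update_self] at hb
  have hle := minLen_le M _ v hv
  rw [hml] at ha
  have hab : d * a ≤ d * b := by omega
  refine ⟨b - a, ?_⟩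
  rw [Nat.mul_sub]
  omega

theorem Good.calc (M : LTW F ar Δ Q) (hdom : M.NonemptyDoms) {d : ℕ} {q : Q}
    (hg : Good M d q) {f : F} {r : LTWRule Δ Q (ar f)} (h : M.rules q f = some r)
    (ws : Fin (ar f) → List Δ) (hw : ∀ i, ws i ∈ M.lang (r.st i)) :
    ((interleave (ar f) r.word ws).length - minLen M q) / d =
      (∑ j, (r.word j).length + ∑ i, minLen M (r.st i) - minLen M q) / d +
        ∑ i, ((ws i).length - minLen M (r.st i)) / d := by
  rcases Nat.eq_zero_or_pos d with rfl | hd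
  · simp
  choose m hm hml using fun q => exists_minLen M hdom q
  obtain ⟨a, ha⟩ := hg _ (interleave_mem_lang M f q r h (fun j => m (r.st j)) (fun j => hm _))
  choose k hk using fun i => hg.child M hdom h i (ws i) (hw i)
  rw [interleave_length] at ha ⊢
  simp only [hml] at ha
  simp only [hk, ha, Finset.sum_add_distrib, ← Finset.mul_sum, Nat.add_sub_cancel_left,
    Nat.mul_div_cancel_left _ hd]
  rw [← add_assoc, ha, add_assoc, Nat.add_sub_cancel_left, ← Nat.mul_add,
    Nat.mul_div_cancel_left _ hd]

theorem pow_split (w : List Δ) (k l : ℕ) (h : w.length * k ≤ w.length * l) :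
    ∃ j, w.length * l = w.length * k + w.length * j ∧ listPow w l = listPow w (k + j) ∧
      listPow w (w.length * j / w.length) = listPow w j := by
  rcases Nat.eq_zero_or_pos w.length with h0 | h0
  · have e : ∀ n, listPow w n = [] := fun n =>
      List.length_eq_zero_iff.mp (by rw [listPow_length, h0, zero_mul])
    exact ⟨0, by simp [h0], by simp [e], by simp⟩
  · obtain ⟨j, rfl⟩ := Nat.exists_eq_add_of_le (Nat.le_of_mul_le_mul_left h h0)
    exact ⟨j, by ring, rfl, by rw [Nat.mul_div_cancel_left _ h0]⟩

theorem qp_spec (M : LTW F ar Δ Q) (hdom : M.NonemptyDoms) (q : Q)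
    (h : QuasiPeriodic (M.lang q)) : ∃ w A B : List Δ, Good M w.length q ∧
      ∀ v ∈ M.lang q, v = A ++ listPow w ((v.length - minLen M q) / w.length) ++ B := by
  obtain ⟨m, hm, hml⟩ := exists_minLen M hdom q
  rcases h with ⟨u, w, h, -⟩ | ⟨u, w, h, -⟩
  · obtain ⟨k, hk⟩ := h m hm
    have main : ∀ v ∈ M.lang q, ∃ j, v.length = minLen M q + w.length * j ∧
        v = m ++ listPow w ((v.length - minLen M q) / w.length) := by
      intro v hv
      obtain ⟨l, hl⟩ := h v hv
      have hle := minLen_le M q v hv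
      have e1 := congrArg List.length hk
      have e2 := congrArg List.length hl
      simp only [List.length_append, listPow_length] at e1 e2
      obtain ⟨j, h1, h2, h3⟩ := pow_split w k l (by omega)
      have e3 : v.length - minLen M q = w.length * j := by omega
      refine ⟨j, by omega, ?_⟩
      rw [e3, h3, hk, hl, h2, listPow_add, List.append_assoc]
    exact ⟨w, m, [], fun v hv => (main v hv).imp fun _ h => h.1, fun v hv => by
      obtain ⟨j, -, h⟩ := main v hv
      simpa using h⟩
  · obtain ⟨k, hk⟩ := h m hm
    have main : ∀ v ∈ M.lang q, ∃ j, v.length = minLen M q + w.length * j ∧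
        v = listPow w ((v.length - minLen M q) / w.length) ++ m := by
      intro v hv
      obtain ⟨l, hl⟩ := h v hv
      have hle := minLen_le M q v hv
      have e1 := congrArg List.length hk
      have e2 := congrArg List.length hl
      simp only [List.length_append, listPow_length] at e1 e2
      obtain ⟨j, h1, h2, h3⟩ := pow_split w k l (by omega)
      have e3 : v.length - minLen M q = w.length * j := by omega
      refine ⟨j, by omega, ?_⟩
      rw [e3, h3, hk, hl, h2, add_comm, listPow_add, List.append_assoc]
    exact ⟨w, [], m, fun v hv => (main v hv).imp fun _ h => h.1, fun v hv => by
      obtain ⟨j, -, h⟩ := main v hv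
      simpa using h⟩

theorem earliest_of_nil {L : Set (List Δ)} (h : [] ∈ L) : EarliestLang L :=
  ⟨fun _ hw => List.prefix_nil.mp (hw _ h), fun _ hw => List.suffix_nil.mp (hw _ h)⟩

theorem qp_spec' (M : LTW F ar Δ Q) (hdom : M.NonemptyDoms) : ∃ w A B : Q → List Δ,
    (∀ q, QuasiPeriodic (M.lang q) → Good M (w q).length q ∧ ∀ v ∈ M.lang q,
      v = A q ++ listPow (w q) ((v.length - minLen M q) / (w q).length) ++ B q) ∧
    ∀ q, ¬ QuasiPeriodic (M.lang q) → A q = [] ∧ B q = [] := by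
  have : ∀ q, ∃ w A B : List Δ, (QuasiPeriodic (M.lang q) → Good M w.length q ∧
      ∀ v ∈ M.lang q, v = A ++ listPow w ((v.length - minLen M q) / w.length) ++ B) ∧
      (¬ QuasiPeriodic (M.lang q) → A = [] ∧ B = []) := by
    intro q
    by_cases h : QuasiPeriodic (M.lang q)
    · obtain ⟨w, A, B, h1⟩ := qp_spec M hdom q h
      exact ⟨w, A, B, fun _ => h1, fun h' => absurd h h'⟩
    · exact ⟨[], [], [], fun h' => absurd h' h, fun _ => ⟨rfl, rfl⟩⟩
  choose w A B h1 h2 using this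
  exact ⟨w, A, B, h1, h2⟩

/-- States of the new transducer. -/
abbrev NewState (M : LTW F ar Δ Q) (w : Q → List Δ) : Type :=
  {q : Q // ¬ QuasiPeriodic (M.lang q)} ⊕ {x : Q × Q // Good M (w x.1).length x.2}

/-- The original state simulated by a new state. -/
def proj (M : LTW F ar Δ Q) (w : Q → List Δ) : NewState M w → Q
  | .inl q => q.1
  | .inr x => x.1.2

/-- The transformation of the output performed by a new state. -/
noncomputable def outp (M : LTW F ar Δ Q) (w : Q → List Δ) : NewState M w → List Δ → List Δ
  | .inl _ => id
  | .inr x => fun v => listPow (w x.1.1) ((v.length - minLen M x.1.2) / (w x.1.1).length)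

theorem exists_equiv_aux [Finite Q] (M : LTW F ar Δ Q) (hdom : M.NonemptyDoms) :
    ∃ (Q' : Type) (_ : Finite Q') (M' : LTW F ar Δ Q'),
      M.sem = M'.sem ∧
      ∀ q' : Q', QuasiPeriodic (M'.lang q') → EarliestLang (M'.lang q') := by
  classical
  obtain ⟨w, A, B, hqp, hnqp⟩ := qp_spec' M hdom
  have hemb : ∀ q, ∃ x : NewState M w, proj M w x = q ∧
      ∀ v ∈ M.lang q, v = A q ++ outp M w x v ++ B q := by
    intro q
    by_cases h : QuasiPeriodic (M.lang q)
    · exact ⟨.inr ⟨(q, q), (hqp q h).1⟩, rfl, (hqp q h).2⟩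
    · refine ⟨.inl ⟨q, h⟩, rfl, fun v _ => ?_⟩
      simp [hnqp q h, outp]
  choose emb hemb1 hemb2 using hemb
  let emb2 : Q → Q → NewState M w := fun q p =>
    if h : Good M (w q).length p then .inr ⟨(q, p), h⟩ else emb p
  let M' : LTW F ar Δ (NewState M w) :=
    { pre := M.pre ++ A M.init
      init := emb M.init
      post := B M.init ++ M.post
      rules := fun x f => match x with
        | .inl q => (M.rules q.1 f).map fun r =>
            { word := shiftW (ar f) [] r.word (fun i => A (r.st i)) (fun i => B (r.st i))
              st := fun i => emb (r.st i)
              perm := r.perm }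
        | .inr x => (M.rules x.1.2 f).map fun r =>
            { word := Fin.cons (listPow (w x.1.1)
                ((∑ j, (r.word j).length + ∑ i, minLen M (r.st i) - minLen M x.1.2) /
                  (w x.1.1).length)) (fun _ => [])
              st := fun i => emb2 x.1.1 (r.st i)
              perm := r.perm } }
  have sim : ∀ t x, M'.semState t x = (M.semState t (proj M w x)).map (outp M w x) := by
    apply simulation
    · rintro (q | x) f h
      · simp only [proj] at h
        simp [M', h]
      · simp only [proj] at h
        simp [M', h]
    · rintro (q | x) f r h
      · simp only [proj] at h
        refine ⟨_, by simp only [M', h, Option.map_some]; rfl, rfl, fun i => hemb1 _, ?_⟩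
        intro ws hws
        simp only [interleave_shiftW, List.nil_append]
        change interleave _ _ _ = _
        congr 1
        funext i
        exact hemb2 _ _ (hws i)
      · simp only [proj] at h
        have hc : ∀ i, emb2 x.1.1 (r.st i) =
            .inr ⟨(x.1.1, r.st i), x.2.child M hdom h i⟩ := fun i =>
          dif_pos (x.2.child M hdom h i)
        refine ⟨_, by simp only [M', h, Option.map_some]; rfl, rfl, fun i => ?_, ?_⟩
        · simp only [hc]; rfl
        · intro ws hws
          simp only [hc]
          change listPow _ _ = interleave _ _ (fun i => listPow _ _)
          rw [interleave_pow]
          congr 1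
          exact x.2.calc M hdom h ws hws
  refine ⟨NewState M w, inferInstance, M', ?_, ?_⟩
  · funext t
    simp only [LTW.sem, sim]
    change _ = Option.map (fun v => (M.pre ++ A M.init) ++ v ++ (B M.init ++ M.post))
      (Option.map (outp M w (emb M.init)) (M.semState t (proj M w (emb M.init))))
    rw [hemb1]
    cases hs : M.semState t M.init with
    | none => rfl
    | some v =>
      simp only [Option.map_some]
      conv_lhs => rw [hemb2 M.init v ⟨t, hs⟩]
      simp
  · rintro (q | x) h
    · exfalso
      apply q.2
      have : M'.lang (.inl q) = M.lang q.1 := by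
        have e : ∀ t, M'.semState t (.inl q) = M.semState t q.1 := fun t => by
          rw [sim]
          change Option.map id (M.semState t q.1) = _
          simp
        ext v
        exact exists_congr fun t => by rw [e]
      rwa [this] at h
    · apply earliest_of_nil
      obtain ⟨v, ⟨t, ht⟩, hv⟩ := exists_minLen M hdom x.1.2
      refine ⟨t, ?_⟩
      rw [sim]
      simp [proj, outp, ht, hv, listPow]

end Aux

/-- every LTW has an equivalent LTW in which every quasi-periodic state
is earliest. -/
theorem exists_equivalent_quasiPeriodic_states_earliest
    {F Δ Q : Type} {ar : F → ℕ} [Finite Q]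
    (M : LTW F ar Δ Q) (hdom : M.NonemptyDoms) :
    ∃ (Q' : Type) (_ : Finite Q') (M' : LTW F ar Δ Q'),
      M.sem = M'.sem ∧
      ∀ q' : Q', QuasiPeriodic (M'.lang q') → EarliestLang (M'.lang q') := by
  exact exists_equiv_aux M hdom

end LTWpaper
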